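/- For every integer n ≥ 2, every positive integer N, and every n-linear form U : (ℝ^N)^n → ℝ, one has (∑_{i₁,…,iₙ=1}^N |U(e_{i₁},…,e_{iₙ})|^{2n/(n+1)})^{(n+1)/(2n)} ≤ √2 · (n-1)^{0.526322} · ‖U‖. Consequently the optimal real multilinear Bohnenblust–Hille constant satisfies K_n ≤ √2 (n-1)^{0.526322}. -/

import Mathlib

open Real

/-- The Bohnenblust--Hille quantity of an `n`-linear form on `ℓ_∞^N` over `ℝ`:
`(∑_{i₁,…,iₙ} |U(e_{i₁},…,e_{iₙ})|^{2n/(n+1)})^{(n+1)/(2n)}`. -/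
noncomputable def BHreal (n N : ℕ)
    (U : ContinuousMultilinearMap ℝ (fun _ : Fin n => (Fin N → ℝ)) ℝ) : ℝ :=
  (∑ i : Fin n → Fin N,
      |U (fun k => Pi.single (i k) (1 : ℝ))| ^ ((2 * n : ℝ) / (n + 1)))
    ^ ((n + 1 : ℝ) / (2 * n))

/-- The optimal real multilinear Bohnenblust--Hille constant. -/
noncomputable def KrealOpt (n : ℕ) : ℝ :=
  sInf {C : ℝ | 1 ≤ C ∧ ∀ N : ℕ, 0 < N →
    ∀ U : ContinuousMultilinearMap ℝ (fun _ : Fin n => (Fin N → ℝ)) ℝ,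
      BHreal n N U ≤ C * ‖U‖}


def bhS (b : Bool) : ℝ := if b then 1 else -1

noncomputable def bhE {N : ℕ} (f : (Fin N → Bool) → ℝ) : ℝ := (∑ x, f x) / 2 ^ N

lemma bhE_zero (f : (Fin 0 → Bool) → ℝ) : bhE f = f (fun i => i.elim0) := by
  simp only [bhE, Fintype.sum_unique, pow_zero, div_one]
  congr 1

lemma bhE_succ {N : ℕ} (f : (Fin (N+1) → Bool) → ℝ) :
    bhE f = (bhE (fun x => f (Fin.cons true x)) + bhE (fun x => f (Fin.cons false x))) / 2 := by
  unfold bhE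
  rw [← (Fin.consEquiv (fun _ : Fin (N+1) => Bool)).sum_comp, Fintype.sum_prod_type]
  simp only [Fintype.sum_bool]
  rw [pow_succ]
  field_simp
  rfl

lemma bhE_mono {N : ℕ} {f g : (Fin N → Bool) → ℝ} (h : ∀ x, f x ≤ g x) : bhE f ≤ bhE g := by
  unfold bhE
  gcongr with x
  exact h x

lemma bhE_add {N : ℕ} (f g : (Fin N → Bool) → ℝ) :
    bhE (fun x => f x + g x) = bhE f + bhE g := by
  simp [bhE, Finset.sum_add_distrib, add_div]

lemma bhE_sub {N : ℕ} (f g : (Fin N → Bool) → ℝ) :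
    bhE (fun x => f x - g x) = bhE f - bhE g := by
  simp [bhE, Finset.sum_sub_distrib, sub_div]

lemma bhE_mul {N : ℕ} (c : ℝ) (f : (Fin N → Bool) → ℝ) :
    bhE (fun x => c * f x) = c * bhE f := by
  simp [bhE, ← Finset.mul_sum, mul_div_assoc]

lemma bhE_const {N : ℕ} (c : ℝ) : bhE (fun _ : Fin N → Bool => c) = c := by
  simp [bhE]

lemma bhE_sum {N : ℕ} {ι : Type*} (s : Finset ι) (f : ι → (Fin N → Bool) → ℝ) :
    bhE (fun x => ∑ i ∈ s, f i x) = ∑ i ∈ s, bhE (f i) := by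
  simp only [bhE]
  rw [Finset.sum_comm, Finset.sum_div]

lemma bhE_equiv {N : ℕ} (e : (Fin N → Bool) ≃ (Fin N → Bool)) (f : (Fin N → Bool) → ℝ) :
    bhE (fun x => f (e x)) = bhE f := by
  simp only [bhE]
  rw [e.sum_comp]

def bhF {N : ℕ} (i : Fin N) (x : Fin N → Bool) : Fin N → Bool := Function.update x i (!x i)

lemma bhF_invol {N : ℕ} (i : Fin N) : Function.Involutive (bhF i) := by
  intro x; simp [bhF]

lemma bhF_zero {N : ℕ} (b : Bool) (x : Fin N → Bool) :
    bhF 0 (Fin.cons b x : Fin (N+1) → Bool) = Fin.cons (!b) x := by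
  simp [bhF]

lemma bhF_succ {N : ℕ} (i : Fin N) (b : Bool) (x : Fin N → Bool) :
    bhF i.succ (Fin.cons b x : Fin (N+1) → Bool) = Fin.cons b (bhF i x) := by
  simp [bhF]

noncomputable def bhD {N : ℕ} (f : (Fin N → Bool) → ℝ) : ℝ :=
  ∑ i, bhE (fun x => (f x - f (bhF i x)) ^ 2) / 4

noncomputable def bhW {N : ℕ} (f : (Fin N → Bool) → ℝ) : ℝ :=
  ∑ i, (bhE (fun x => bhS (x i) * f x)) ^ 2

lemma bhD_succ {N : ℕ} (f : (Fin (N+1) → Bool) → ℝ) :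
    bhD f = bhD (fun x => (f (Fin.cons true x) + f (Fin.cons false x)) / 2)
      + bhD (fun x => (f (Fin.cons true x) - f (Fin.cons false x)) / 2)
      + bhE (fun x => ((f (Fin.cons true x) - f (Fin.cons false x)) / 2) ^ 2) := by
  unfold bhD
  rw [Fin.sum_univ_succ, add_comm, ← Finset.sum_add_distrib]
  congr 1
  · refine Finset.sum_congr rfl fun i _ => ?_
    rw [bhE_succ]
    simp only [bhF_succ]
    rw [← bhE_add, ← add_div, ← bhE_add, div_div, div_eq_inv_mul, div_eq_inv_mul, ← bhE_mul, ← bhE_mul]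
    congr 1; funext x; ring
  · rw [bhE_succ]
    simp only [bhF_zero]
    rw [← bhE_add, div_div, div_eq_inv_mul, ← bhE_mul]
    congr 1; funext x; simp only [Bool.not_true, Bool.not_false]; ring

lemma bh_poin {N : ℕ} (f : (Fin N → Bool) → ℝ) :
    bhE (fun x => f x ^ 2) - (bhE f) ^ 2 ≤ bhD f := by
  induction N with
  | zero => simp [bhE_zero, bhD]
  | succ N ih =>
    rw [bhD_succ]
    have h1 := ih (fun x => (f (Fin.cons true x) + f (Fin.cons false x)) / 2)
    have h2 : 0 ≤ bhD (fun x => (f (Fin.cons true x) - f (Fin.cons false x)) / 2) := by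
      unfold bhD bhE; positivity
    have h3 : bhE (fun x => f x ^ 2) = bhE (fun x => ((f (Fin.cons true x) + f (Fin.cons false x)) / 2)^2)
       + bhE (fun x => ((f (Fin.cons true x) - f (Fin.cons false x)) / 2)^2) := by
      rw [bhE_succ, ← bhE_add, ← bhE_add, div_eq_inv_mul, ← bhE_mul]
      congr 1; funext x; ring
    have h4 : bhE f = bhE (fun x => ((f (Fin.cons true x) + f (Fin.cons false x)) / 2)) := by
      rw [bhE_succ, ← bhE_add, div_eq_inv_mul, ← bhE_mul]
      congr 1; funext x; ring
    rw [h3, h4]; linarith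

lemma bh_poin2 {N : ℕ} (f : (Fin N → Bool) → ℝ) :
    2 * (bhE (fun x => f x ^ 2) - (bhE f) ^ 2) - bhW f ≤ bhD f := by
  induction N with
  | zero => simp [bhE_zero, bhD, bhW]
  | succ N ih =>
    rw [bhD_succ]
    have h1 := ih (fun x => (f (Fin.cons true x) + f (Fin.cons false x)) / 2)
    have h2 := bh_poin (fun x => (f (Fin.cons true x) - f (Fin.cons false x)) / 2)
    have h3 : bhE (fun x => f x ^ 2) = bhE (fun x => ((f (Fin.cons true x) + f (Fin.cons false x)) / 2)^2)
       + bhE (fun x => ((f (Fin.cons true x) - f (Fin.cons false x)) / 2)^2) := by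
      rw [bhE_succ, ← bhE_add, ← bhE_add, div_eq_inv_mul, ← bhE_mul]
      congr 1; funext x; ring
    have h4 : bhE f = bhE (fun x => ((f (Fin.cons true x) + f (Fin.cons false x)) / 2)) := by
      rw [bhE_succ, ← bhE_add, div_eq_inv_mul, ← bhE_mul]
      congr 1; funext x; ring
    have h5 : bhW f = (bhE (fun x => ((f (Fin.cons true x) - f (Fin.cons false x)) / 2)))^2 +
        bhW (fun x => ((f (Fin.cons true x) + f (Fin.cons false x)) / 2)) := by
      unfold bhW
      rw [Fin.sum_univ_succ]
      congr 1
      · rw [bhE_succ, ← bhE_add, div_eq_inv_mul, ← bhE_mul]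
        congr 2; funext x; simp [bhS]; ring
      · refine Finset.sum_congr rfl fun i _ => ?_
        rw [bhE_succ, ← bhE_add, div_eq_inv_mul, ← bhE_mul]
        congr 2; funext x; simp; ring
    rw [h3, h4, h5]; linarith

noncomputable def bhR {N : ℕ} (a : Fin N → ℝ) (x : Fin N → Bool) : ℝ := ∑ i, bhS (x i) * a i

lemma bhS_not (b : Bool) : bhS (!b) = - bhS b := by cases b <;> simp [bhS]

lemma bhR_flip {N : ℕ} (a : Fin N → ℝ) (x : Fin N → Bool) (i : Fin N) :
    bhR a (bhF i x) = bhR a x - 2 * (bhS (x i) * a i) := by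
  unfold bhR
  rw [← Finset.add_sum_erase _ _ (Finset.mem_univ i),
    ← Finset.add_sum_erase _ (fun i => bhS (x i) * a i) (Finset.mem_univ i)]
  have : ∑ j ∈ Finset.univ.erase i, bhS (bhF i x j) * a j
      = ∑ j ∈ Finset.univ.erase i, bhS (x j) * a j := by
    refine Finset.sum_congr rfl fun j hj => ?_
    rw [bhF, Function.update_of_ne (Finset.ne_of_mem_erase hj)]
  rw [this]
  simp [bhF, bhS_not]; ring

lemma bhE_R2 {N : ℕ} (a : Fin N → ℝ) : bhE (fun x => bhR a x ^ 2) = ∑ i, a i ^ 2 := by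
  induction N with
  | zero => simp [bhE_zero, bhR]
  | succ N ih =>
    rw [bhE_succ, ← bhE_add, Fin.sum_univ_succ, ← ih, div_eq_inv_mul, ← bhE_mul,
      ← bhE_const (N := N) (a 0 ^ 2), ← bhE_add]
    congr 1; funext x
    simp [bhR, Fin.sum_univ_succ, bhS]; ring

lemma bhE_R4 {N : ℕ} (a : Fin N → ℝ) : bhE (fun x => bhR a x ^ 4) ≤ 3 * (∑ i, a i ^ 2) ^ 2 := by
  induction N with
  | zero => simp [bhE_zero, bhR]
  | succ N ih =>
    have h1 : bhE (fun x => bhR a x ^ 4) = bhE (fun x => bhR (fun i => a i.succ) x ^ 4) +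
        6 * a 0 ^ 2 * bhE (fun x => bhR (fun i => a i.succ) x ^ 2) + a 0 ^ 4 := by
      rw [bhE_succ, ← bhE_add, div_eq_inv_mul, ← bhE_mul,
        ← bhE_const (N := N) (a 0 ^ 4), ← bhE_mul, ← bhE_add, ← bhE_add]
      congr 1; funext x
      simp [bhR, Fin.sum_univ_succ, bhS]; ring
    rw [h1, bhE_R2, Fin.sum_univ_succ]
    have := ih (fun i => a i.succ)
    nlinarith [sq_nonneg (a 0 ^ 2)]

lemma bhK1 {N : ℕ} (a : Fin N → ℝ) : ∑ i, a i ^ 2 ≤ 2 * (bhE (fun x => |bhR a x|)) ^ 2 := by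
  have h := bh_poin2 (fun x => |bhR a x|)
  have hW : bhW (fun x => |bhR a x|) = 0 := by
    unfold bhW
    refine Finset.sum_eq_zero fun i _ => ?_
    have hinv : Function.Involutive (fun (x : Fin N → Bool) j => !x j) := by
      intro x; funext j; simp
    have h1 := bhE_equiv (Function.Involutive.toPerm _ hinv) (fun x => bhS (x i) * |bhR a x|)
    have h2 : bhE (fun x => bhS ((Function.Involutive.toPerm _ hinv) x i) * |bhR a ((Function.Involutive.toPerm _ hinv) x)|)
        = (-1) * bhE (fun x => bhS (x i) * |bhR a x|) := by
      rw [← bhE_mul]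
      congr 1; funext x
      have : bhR a (fun j => !x j) = - bhR a x := by
        simp [bhR, bhS_not]
      simp [this, bhS_not]
    rw [h2] at h1
    have : bhE (fun x => bhS (x i) * |bhR a x|) = 0 := by linarith
    simp [this]
  have hD : bhD (fun x => |bhR a x|) ≤ bhE (fun x => |bhR a x| ^ 2) := by
    have h1 : ∀ i, bhE (fun x => (|bhR a x| - |bhR a (bhF i x)|) ^ 2) / 4
        = bhE (fun x => (|bhR a x| * (|bhR a x| - |bhR a (bhF i x)|)) / 2) := by
      intro i
      have h2 : bhE (fun x => (|bhR a (bhF i x)|) ^ 2) = bhE (fun x => (|bhR a x|) ^ 2) :=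
        bhE_equiv (Function.Involutive.toPerm _ (bhF_invol i)) (fun x => (|bhR a x|) ^ 2)
      have h3 : bhE (fun x => (|bhR a x| - |bhR a (bhF i x)|) ^ 2) = 
        bhE (fun x => |bhR a x| ^ 2) + bhE (fun x => (|bhR a (bhF i x)|) ^ 2)
          - 2 * bhE (fun x => |bhR a x| * |bhR a (bhF i x)|) := by
        rw [← bhE_mul, ← bhE_add, ← bhE_sub]
        congr 1; funext x; ring
      have h4 : bhE (fun x => (|bhR a x| * (|bhR a x| - |bhR a (bhF i x)|)) / 2) = 
        2⁻¹ * (bhE (fun x => |bhR a x| ^ 2) - bhE (fun x => |bhR a x| * |bhR a (bhF i x)|)) := by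
        rw [← bhE_sub, ← bhE_mul]
        congr 1; funext x; ring
      rw [h3, h4, h2]; ring
    unfold bhD
    rw [Finset.sum_congr rfl fun i _ => h1 i, ← bhE_sum]
    refine bhE_mono fun x => ?_
    rw [← Finset.sum_div, ← Finset.mul_sum, Finset.sum_sub_distrib]
    have h5 : |∑ i, bhR a (bhF i x)| ≤ ∑ i, |bhR a (bhF i x)| := Finset.abs_sum_le_sum_abs _ _
    have h6 : ∑ i, bhR a (bhF i x) = (N - 2) * bhR a x := by
      simp only [bhR_flip, Finset.sum_sub_distrib, ← Finset.mul_sum]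
      simp [bhR]; ring
    rw [h6, abs_mul] at h5
    have h7 : (N - 2 : ℝ) ≤ |(N - 2 : ℝ)| := le_abs_self _
    have h8 := abs_nonneg (bhR a x)
    simp only [Finset.sum_const, Finset.card_univ, Fintype.card_fin, nsmul_eq_mul]
    have h9 : (N:ℝ) * |bhR a x| - ∑ i, |bhR a (bhF i x)| ≤ 2 * |bhR a x| := by nlinarith
    nlinarith
  have h2 : bhE (fun x => |bhR a x| ^ 2) = ∑ i, a i ^ 2 := by
    simp only [sq_abs]; exact bhE_R2 a
  rw [hW] at h
  simp only [h2] at h hD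
  linarith
lemma bh_poly (y : ℝ) (hy : 0 ≤ y) :
    y ^ 5 ≤ 0.029 - 0.2938 * y ^ 2 + 1.229 * y ^ 4 + 0.0827 * y ^ 8 := by
  have h0 : 0 ≤ ((y - 0.48) * (y - 1.33)) ^ 2 := sq_nonneg _
  have h1 := mul_nonneg h0 hy
  have h2 := mul_nonneg h1 hy
  have h3 := mul_nonneg h2 hy
  have h4 := mul_nonneg h3 hy
  have e1 : 0 ≤ y ^ 2 := by positivity
  have e2 : 0 ≤ y ^ 3 := by positivity
  have e3 : 0 ≤ y ^ 4 := by positivity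
  have e5 : 0 ≤ y ^ 5 := by positivity
  have e6 : 0 ≤ y ^ 6 := by positivity
  have e7 : 0 ≤ y ^ 7 := by positivity
  have e8 : 0 ≤ y ^ 8 := by positivity
  linarith

lemma bhK52 {N : ℕ} (a : Fin N → ℝ) (ha : ∑ i, a i ^ 2 = 1) :
    bhE (fun x => |bhR a x| ^ (5 / 2 : ℝ)) ≤ 1.3 := by
  have h1 := bhK1 a
  have h2 := bhE_R2 a
  have h4 := bhE_R4 a
  rw [ha] at h1 h2 h4
  have hp : 0 ≤ bhE (fun x => |bhR a x|) := by unfold bhE; positivity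
  have h1' : 0.707 ≤ bhE (fun x => |bhR a x|) := by
    by_contra hc
    push Not at hc
    nlinarith
  have h5 : bhE (fun x => |bhR a x| ^ (5 / 2 : ℝ)) ≤
      bhE (fun x => 0.029 - 0.2938 * |bhR a x| + 1.229 * bhR a x ^ 2 + 0.0827 * bhR a x ^ 4) := by
    refine bhE_mono fun x => ?_
    have h := bh_poly (√|bhR a x|) (Real.sqrt_nonneg _)
    have e2 : √|bhR a x| ^ 2 = |bhR a x| := Real.sq_sqrt (abs_nonneg _)
    have e4 : √|bhR a x| ^ 4 = bhR a x ^ 2 := by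
      rw [show √|bhR a x| ^ 4 = (√|bhR a x| ^ 2) ^ 2 by ring, e2, sq_abs]
    have e8 : √|bhR a x| ^ 8 = bhR a x ^ 4 := by
      rw [show √|bhR a x| ^ 8 = (√|bhR a x| ^ 4) ^ 2 by ring, e4]; ring
    have e5 : |bhR a x| ^ (5 / 2 : ℝ) = √|bhR a x| ^ 5 := by
      rw [Real.sqrt_eq_rpow, ← Real.rpow_natCast, ← Real.rpow_mul (abs_nonneg _)]
      norm_num
    rw [e5]
    rw [e2, e4, e8] at h
    exact h
  rw [bhE_add, bhE_add, bhE_sub, bhE_const, bhE_mul, bhE_mul, bhE_mul] at h5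
  linarith

lemma bhE_holder {N : ℕ} (f g : (Fin N → Bool) → ℝ) (hf : ∀ x, 0 ≤ f x) (hg : ∀ x, 0 ≤ g x)
    {p q : ℝ} (hpq : p.HolderConjugate q) :
    bhE (fun x => f x * g x) ≤ bhE (fun x => f x ^ p) ^ (1 / p) * bhE (fun x => g x ^ q) ^ (1 / q) := by
  have h := Real.inner_le_Lp_mul_Lq_of_nonneg Finset.univ hpq (fun x _ => hf x) (fun x _ => hg x)
  unfold bhE
  rw [Real.div_rpow (Finset.sum_nonneg fun x _ => Real.rpow_nonneg (hf x) _) (by positivity),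
    Real.div_rpow (Finset.sum_nonneg fun x _ => Real.rpow_nonneg (hg x) _) (by positivity),
    div_mul_div_comm, ← Real.rpow_add (by positivity)]
  have : 1 / p + 1 / q = 1 := by simpa using hpq.inv_add_inv_eq_one
  rw [this, Real.rpow_one]
  gcongr

lemma bhKp1 {N : ℕ} (a : Fin N → ℝ) (ha : ∑ i, a i ^ 2 = 1) (m : ℕ) (hm : 1 ≤ m) :
    1 ≤ (1.69 ^ (1 / m : ℝ) : ℝ) ^ ((2 * m : ℝ) / (m + 1)) *
      bhE (fun x => |bhR a x| ^ ((2 * m : ℝ) / (m + 1))) := by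
  have hm0 : (0:ℝ) < m := by exact_mod_cast hm
  set p : ℝ := (2 * m : ℝ) / (m + 1) with hp
  have hp0 : 0 < p := by positivity
  set r : ℝ := (m + 5) / (m + 1) with hr
  set s : ℝ := (m + 5) / 4 with hs
  have hrs : r.HolderConjugate s := by
    rw [Real.holderConjugate_iff]
    constructor
    · rw [hr, lt_div_iff₀ (by positivity)]; linarith
    · rw [hr, hs]; field_simp; ring
  have h := bhE_holder (fun x => |bhR a x| ^ (p / r)) (fun x => |bhR a x| ^ (5 / 2 / s))
    (fun x => by positivity) (fun x => by positivity) hrs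
  have e1 : ∀ x, |bhR a x| ^ (p / r) * |bhR a x| ^ (5 / 2 / s) = bhR a x ^ 2 := by
    intro x
    rw [← Real.rpow_add_of_nonneg (abs_nonneg _) (by positivity) (by positivity)]
    rw [show p / r + 5 / 2 / s = (2:ℕ) by rw [hp, hr, hs]; field_simp; ring, Real.rpow_natCast, sq_abs]
  have e2 : ∀ x, (|bhR a x| ^ (p / r)) ^ r = |bhR a x| ^ p := by
    intro x
    rw [← Real.rpow_mul (abs_nonneg _)]
    congr 1; rw [hr]; field_simp
  have e3 : ∀ x, (|bhR a x| ^ (5 / 2 / s)) ^ s = |bhR a x| ^ (5 / 2 : ℝ) := by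
    intro x
    rw [← Real.rpow_mul (abs_nonneg _)]
    congr 1; rw [hs]; field_simp
  simp only [e1, e2, e3] at h
  rw [bhE_R2, ha] at h
  set X := bhE (fun x => |bhR a x| ^ p) with hX
  have hX0 : 0 ≤ X := by rw [hX]; unfold bhE; positivity
  have h52 := bhK52 a ha
  have h52' : 0 ≤ bhE (fun x => |bhR a x| ^ (5 / 2 : ℝ)) := by unfold bhE; positivity
  have h6 : 1 ≤ X ^ (1 / r) * (1.3:ℝ) ^ (1 / s) := by
    refine h.trans ?_
    have : bhE (fun x => |bhR a x| ^ (5 / 2 : ℝ)) ^ (1 / s) ≤ (1.3:ℝ) ^ (1 / s) := by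
      apply Real.rpow_le_rpow h52' h52; positivity
    gcongr
  have h7 := Real.one_le_rpow h6 (z := r) (by positivity)
  rw [Real.mul_rpow (by positivity) (by positivity), ← Real.rpow_mul hX0,
    ← Real.rpow_mul (by norm_num), one_div_mul_cancel (by positivity), Real.rpow_one] at h7
  rw [show (1.69:ℝ) = 1.3 ^ (2:ℝ) by norm_num, ← Real.rpow_mul (by norm_num), ← Real.rpow_mul (by norm_num), mul_comm]
  convert h7 using 3
  rw [hp, hs, hr]; field_simp; ring

noncomputable def bhC (m : ℕ) : ℝ := if m = 1 then √2 else (1.69 : ℝ) ^ (1 / m : ℝ)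

lemma bhC_pos (m : ℕ) : 0 < bhC m := by unfold bhC; split_ifs <;> positivity

lemma bhKp {N : ℕ} (a : Fin N → ℝ) (m : ℕ) (hm : 1 ≤ m) :
    (∑ i, a i ^ 2) ^ ((m : ℝ) / (m + 1)) ≤ bhC m ^ ((2 * m : ℝ) / (m + 1)) *
      bhE (fun x => |bhR a x| ^ ((2 * m : ℝ) / (m + 1))) := by
  have hm0 : (0:ℝ) < m := by exact_mod_cast hm
  unfold bhC
  split_ifs with h1
  · subst h1
    have h := bhK1 a
    have e : (2 * (1:ℕ) : ℝ) / ((1:ℕ) + 1) = 1 := by norm_num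
    simp only [e, Real.rpow_one]
    have e' : ((1:ℕ) : ℝ) / ((1:ℕ) + 1) = 1 / 2 := by norm_num
    rw [e', ← Real.sqrt_eq_rpow]
    have hp : 0 ≤ bhE (fun x => |bhR a x|) := by unfold bhE; positivity
    apply Real.sqrt_le_iff.2
    refine ⟨by positivity, ?_⟩
    rw [mul_pow, Real.sq_sqrt (by norm_num)]
    exact h
  · set σ := ∑ i, a i ^ 2 with hσ
    have hσ0 : 0 ≤ σ := by rw [hσ]; positivity
    rcases hσ0.eq_or_lt with h0 | h0
    · rw [← h0, Real.zero_rpow (by positivity)]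
      unfold bhE; positivity
    · have h := bhKp1 (fun i => a i / √σ) (by
        simp only [div_pow, Real.sq_sqrt hσ0]
        rw [← Finset.sum_div, ← hσ, div_self h0.ne']) m hm
      have e : ∀ x, |bhR (fun i => a i / √σ) x| ^ ((2 * m : ℝ) / (m + 1)) =
          (σ ^ ((m : ℝ) / (m + 1)))⁻¹ * |bhR a x| ^ ((2 * m : ℝ) / (m + 1)) := by
        intro x
        have : bhR (fun i => a i / √σ) x = bhR a x / √σ := by
          simp [bhR, Finset.sum_div, mul_div_assoc]
        rw [this, abs_div, Real.div_rpow (abs_nonneg _) (abs_nonneg _), abs_of_nonneg (Real.sqrt_nonneg σ),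
          Real.sqrt_eq_rpow, ← Real.rpow_mul hσ0, div_eq_inv_mul]
        congr 3; field_simp
      simp only [e] at h
      rw [bhE_mul] at h
      have hpos : 0 < σ ^ ((m : ℝ) / (m + 1)) := by positivity
      rw [mul_left_comm, ← div_eq_inv_mul, le_div_iff₀ hpos, one_mul] at h
      exact h

lemma bh_gholder {ι T : Type*} [Fintype ι] [Nonempty ι] [Fintype T] (F : ι → T → ℝ) (hF : ∀ k t, 0 ≤ F k t)
    (w : ℝ) (hw0 : 0 < w) (hw : ∑ _k ∈ (Finset.univ : Finset ι), w = 1) :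
    ∑ t, ∏ k, F k t ^ w ≤ ∏ k, (∑ t, F k t) ^ w := by
  by_cases h : ∃ k, ∑ t, F k t = 0
  · obtain ⟨k, hk⟩ := h
    rw [Finset.sum_eq_zero_iff_of_nonneg (fun t _ => hF k t)] at hk
    have : ∑ t, ∏ k, F k t ^ w = 0 := by
      refine Finset.sum_eq_zero fun t ht => Finset.prod_eq_zero (Finset.mem_univ k) ?_
      rw [hk t ht, Real.zero_rpow hw0.ne']
    rw [this]
    exact Finset.prod_nonneg fun k _ => Real.rpow_nonneg (Finset.sum_nonneg fun t _ => hF k t) _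
  · push Not at h
    have hpos : ∀ k, 0 < ∑ t, F k t := fun k =>
      lt_of_le_of_ne (Finset.sum_nonneg fun t _ => hF k t) (h k).symm
    have key : ∑ t, ∏ k, (F k t / ∑ t, F k t) ^ w ≤ 1 := by
      calc ∑ t, ∏ k, (F k t / ∑ t, F k t) ^ w ≤ ∑ t, ∑ k, w * (F k t / ∑ t, F k t) := by
            refine Finset.sum_le_sum fun t _ => ?_
            exact Real.geom_mean_le_arith_mean_weighted _ (fun _ => w) _ (fun _ _ => hw0.le) hw
              (fun k _ => div_nonneg (hF k t) (hpos k).le)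
        _ = 1 := by
            rw [Finset.sum_comm]
            refine Eq.trans ?_ hw
            refine Finset.sum_congr rfl fun k _ => ?_
            rw [← Finset.mul_sum, ← Finset.sum_div, div_self (h k), mul_one]
    have e : ∀ t, ∏ k, (F k t / ∑ t, F k t) ^ w = (∏ k, F k t ^ w) / ∏ k, (∑ t, F k t) ^ w := by
      intro t
      rw [← Finset.prod_div_distrib]
      exact Finset.prod_congr rfl fun k _ => Real.div_rpow (hF k t) (hpos k).le _
    rw [Finset.sum_congr rfl (fun t _ => e t), ← Finset.sum_div, div_le_one (Finset.prod_pos fun k _ => Real.rpow_pos_of_pos (hpos k) _)] at key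
    exact key

lemma bh_LW0 {I : Type*} [Fintype I] (h : Fin 2 → (Fin 1 → I) → ℝ) :
    ∑ i : Fin 2 → I, ∏ k, h k (k.removeNth i) ≤ ∏ k, ∑ i, h k i := by
  rw [← (Fin.consEquiv (fun _ : Fin 2 => I)).sum_comp, Fintype.sum_prod_type]
  simp only [Fin.prod_univ_two]
  rw [← (Equiv.funUnique (Fin 1) I).symm.sum_comp (h 1), Finset.sum_mul_sum, Finset.sum_comm]
  refine le_of_eq (Finset.sum_congr rfl fun t _ => Finset.sum_congr rfl fun s _ => ?_)
  congr 2
  funext j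
  fin_cases j
  rfl

lemma bh_LW {I : Type*} [Fintype I] (m : ℕ) (h : Fin (m + 2) → (Fin (m + 1) → I) → ℝ)
    (hh : ∀ k i, 0 ≤ h k i) :
    ∑ i : Fin (m + 2) → I, ∏ k, h k (k.removeNth i) ≤
      ∏ k, (∑ i, h k i ^ (m + 1 : ℝ)) ^ (1 / (m + 1) : ℝ) := by
  induction m with
  | zero =>
    have h0 := bh_LW0 h
    simpa only [Nat.cast_zero, zero_add, div_one, Real.rpow_one] using h0
  | succ m ih =>
    have hS : ∀ k, 0 ≤ ∑ i, h k i ^ ((m + 1 : ℕ) + 1 : ℝ) := fun k =>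
      Finset.sum_nonneg fun i _ => Real.rpow_nonneg (hh k i) _
    rw [← (Fin.consEquiv (fun _ : Fin (m + 3) => I)).sum_comp, Fintype.sum_prod_type]
    have e : ∀ t (i' : Fin (m + 2) → I), ∏ k, h k (k.removeNth (Fin.consEquiv (fun _ : Fin (m + 3) => I) (t, i')))
        = h 0 i' * ∏ k : Fin (m + 2), h k.succ (Fin.cons t (k.removeNth i')) := by
      intro t i'
      rw [Fin.prod_univ_succ]
      congr 1
      refine Finset.prod_congr rfl fun k _ => ?_
      congr 1
      funext j
      refine Fin.cases ?_ (fun j => ?_) j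
      · simp [Fin.removeNth, Fin.consEquiv]
      · simp [Fin.removeNth, Fin.consEquiv]
    simp only [e]
    have hm1 : (0:ℝ) < (m:ℝ) + 1 := by positivity
    have hpq : ((m:ℝ) + 2).HolderConjugate (((m:ℝ) + 2) / (m + 1)) := by
      rw [Real.holderConjugate_iff]
      constructor
      · linarith
      · field_simp; ring
    have step : ∀ t, ∑ i' : Fin (m + 2) → I, h 0 i' * ∏ k : Fin (m + 2), h k.succ (Fin.cons t (k.removeNth i'))
        ≤ (∑ i, h 0 i ^ ((m:ℝ) + 2)) ^ (1 / ((m:ℝ) + 2)) *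
          ∏ k : Fin (m + 2), (∑ j, h k.succ (Fin.cons t j) ^ ((m:ℝ) + 2)) ^ (1 / ((m:ℝ) + 2)) := by
      intro t
      refine (Real.inner_le_Lp_mul_Lq_of_nonneg Finset.univ hpq (fun i _ => hh 0 i)
        (fun i _ => Finset.prod_nonneg fun k _ => hh _ _)).trans ?_
      refine mul_le_mul_of_nonneg_left ?_ (Real.rpow_nonneg (Finset.sum_nonneg fun i _ => Real.rpow_nonneg (hh 0 i) _) _)
      have h1 := ih (fun k j => h k.succ (Fin.cons t j) ^ (((m:ℝ) + 2) / (m + 1)))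
        (fun k i => Real.rpow_nonneg (hh _ _) _)
      have e1 : ∀ (k : Fin (m+2)) (j : Fin (m+1) → I), (h k.succ (Fin.cons t j) ^ (((m:ℝ) + 2) / (m + 1))) ^ (m + 1 : ℝ)
          = h k.succ (Fin.cons t j) ^ ((m:ℝ) + 2) := by
        intro k j
        rw [← Real.rpow_mul (hh _ _), div_mul_cancel₀ _ hm1.ne']
      simp only [e1] at h1
      simp only [Real.finsetProd_rpow _ _ (fun k _ => hh _ _)] at h1
      refine (Real.rpow_le_rpow (Finset.sum_nonneg fun i _ => Real.rpow_nonneg (Finset.prod_nonneg fun k _ => hh _ _) _) h1 (by positivity)).trans ?_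
      rw [← Real.finsetProd_rpow _ _ (fun k _ => Real.rpow_nonneg (Finset.sum_nonneg fun i _ => Real.rpow_nonneg (hh _ _) _) _)]
      refine le_of_eq (Finset.prod_congr rfl fun k _ => ?_)
      rw [← Real.rpow_mul (Finset.sum_nonneg fun i _ => Real.rpow_nonneg (hh _ _) _)]
      congr 1
      field_simp
    refine (Finset.sum_le_sum fun t _ => step t).trans ?_
    rw [← Finset.mul_sum, Fin.prod_univ_succ]
    have e2 : (((m + 1 : ℕ) : ℝ) + 1) = (m:ℝ) + 2 := by push_cast; ring
    rw [e2]
    refine mul_le_mul_of_nonneg_left ?_ (Real.rpow_nonneg (Finset.sum_nonneg fun i _ => Real.rpow_nonneg (hh 0 i) _) _)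
    refine (bh_gholder (fun (k : Fin (m+2)) t => ∑ j, h k.succ (Fin.cons t j) ^ ((m:ℝ) + 2))
      (fun k t => Finset.sum_nonneg fun i _ => Real.rpow_nonneg (hh _ _) _) (1 / ((m:ℝ) + 2)) (by positivity)
      (by simp; field_simp)).trans ?_
    refine le_of_eq (Finset.prod_congr rfl fun k _ => ?_)
    congr 1
    rw [← (Fin.consEquiv (fun _ : Fin (m + 2) => I)).sum_comp, Fintype.sum_prod_type]
    rfl

/-- mixed-norm inequality, normalized -/
lemma bh_mixed {I : Type*} [Fintype I] (m : ℕ) (b : (Fin (m + 2) → I) → ℝ) (hb : ∀ i, 0 ≤ b i)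
    (hG : ∀ k : Fin (m + 2), ∑ i' : Fin (m + 1) → I,
      (∑ t, b (k.insertNth t i') ^ 2) ^ ((m + 1 : ℝ) / (m + 2)) ≤ 1) :
    ∑ i, b i ^ ((2 * (m + 2) : ℝ) / (m + 3)) ≤ 1 := by
  -- `g k i'` is the square of the `ℓ²` norm in direction `k`
  set g : Fin (m + 2) → (Fin (m + 1) → I) → ℝ := fun k i' => ∑ t, b (k.insertNth t i') ^ 2 with hg
  have hg0 : ∀ k i', 0 ≤ g k i' := fun k i' => Finset.sum_nonneg fun t _ => sq_nonneg _
  have hm : (0:ℝ) < (m:ℝ) + 2 := by positivity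
  have hm3 : (0:ℝ) < (m:ℝ) + 3 := by positivity
  have hbg : ∀ k i, b i ^ 2 ≤ g k (k.removeNth i) := by
    intro k i
    have := Finset.single_le_sum (f := fun t => b (k.insertNth t (k.removeNth i)) ^ 2)
      (fun t _ => sq_nonneg _) (Finset.mem_univ (i k))
    simpa [hg] using this
  have h1 : ∑ i : Fin (m + 2) → I, ∏ k, (g k (k.removeNth i)) ^ (1 / ((m:ℝ) + 2)) ≤ 1 := by
    refine (bh_LW m (fun k i' => (g k i') ^ (1 / ((m:ℝ) + 2)))
      (fun k i => Real.rpow_nonneg (hg0 _ _) _)).trans ?_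
    refine Finset.prod_le_one (fun k _ => Real.rpow_nonneg (Finset.sum_nonneg fun i _ =>
      Real.rpow_nonneg (Real.rpow_nonneg (hg0 _ _) _) _) _) fun k _ => ?_
    refine Real.rpow_le_one (Finset.sum_nonneg fun i _ =>
      Real.rpow_nonneg (Real.rpow_nonneg (hg0 _ _) _) _) ?_ (by positivity)
    refine le_trans (le_of_eq ?_) (hG k)
    refine Finset.sum_congr rfl fun i' _ => ?_
    rw [← Real.rpow_mul (hg0 _ _)]
    congr 1; field_simp
  have h2 : ∀ k : Fin (m + 2), ∑ i : Fin (m + 2) → I,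
      b i ^ 2 * (g k (k.removeNth i)) ^ (-(1 / ((m:ℝ) + 2))) ≤ 1 := by
    intro k
    refine le_trans (le_of_eq ?_) (hG k)
    rw [← (Fin.insertNthEquiv (fun _ : Fin (m + 2) => I) k).sum_comp, Fintype.sum_prod_type,
      Finset.sum_comm]
    refine Finset.sum_congr rfl fun i' _ => ?_
    have e : ∀ t, (Fin.insertNthEquiv (fun _ : Fin (m + 2) => I) k) (t, i') = k.insertNth t i' := fun t => rfl
    simp only [e, Fin.removeNth_insertNth]
    rw [← Finset.sum_mul]
    change g k i' * g k i' ^ _ = g k i' ^ _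
    rcases (hg0 k i').eq_or_lt with h0 | h0
    · rw [← h0, zero_mul, Real.zero_rpow (by positivity)]
    · rw [← Real.rpow_one_add' h0.le]
      · congr 1; field_simp; ring
      · have : 1 / ((m:ℝ) + 2) < 1 := by rw [div_lt_one hm]; linarith [(Nat.cast_nonneg m : (0:ℝ) ≤ m)]
        linarith
  have key : ∀ i, b i ^ ((2 * (m + 2) : ℝ) / (m + 3)) ≤
      ((m + 2) / (m + 3)) * (∑ k, (1 / ((m:ℝ) + 2)) * (b i ^ 2 * (g k (k.removeNth i)) ^ (-(1 / ((m:ℝ) + 2)))))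
       + (1 / (m + 3)) * ∏ k, (g k (k.removeNth i)) ^ (1 / ((m:ℝ) + 2)) := by
    intro i
    have hpr : 0 ≤ ∏ k, (g k (k.removeNth i)) ^ (1 / ((m:ℝ) + 2)) :=
      Finset.prod_nonneg fun k _ => Real.rpow_nonneg (hg0 _ _) _
    rcases (hb i).eq_or_lt with h0 | h0
    · rw [← h0, Real.zero_rpow (by positivity)]
      simp only [ne_eq, OfNat.ofNat_ne_zero, not_false_eq_true, zero_pow, zero_mul, mul_zero, Finset.sum_const_zero, zero_add]
      positivity
    have hgp : ∀ k, 0 < g k (k.removeNth i) := fun k => lt_of_lt_of_le (by positivity) (hbg k i)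
    have a1 := Real.geom_mean_le_arith_mean_weighted Finset.univ (fun _ : Fin (m + 2) => 1 / ((m:ℝ) + 2))
      (fun k => b i ^ 2 * (g k (k.removeNth i)) ^ (-(1 / ((m:ℝ) + 2)))) (fun _ _ => by positivity)
      (by simp; field_simp) (fun k _ => mul_nonneg (sq_nonneg _) (Real.rpow_nonneg (hg0 _ _) _))
    set P := ∏ k, (g k (k.removeNth i)) ^ (1 / ((m:ℝ) + 2)) with hP
    have hP0 : 0 < P := Finset.prod_pos fun k _ => Real.rpow_pos_of_pos (hgp k) _
    have a2 : ∏ k, (b i ^ 2 * (g k (k.removeNth i)) ^ (-(1 / ((m:ℝ) + 2)))) ^ (1 / ((m:ℝ) + 2))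
        = b i ^ 2 * (P ^ (1 / ((m:ℝ) + 2)))⁻¹ := by
      rw [Real.finsetProd_rpow _ _ (fun k _ => mul_nonneg (sq_nonneg _) (Real.rpow_nonneg (hg0 _ _) _)),
        Finset.prod_mul_distrib, Finset.prod_const]
      simp only [Real.rpow_neg (hg0 _ _), Finset.prod_inv_distrib]
      rw [← hP, Real.mul_rpow (by positivity) (by positivity), Real.inv_rpow hP0.le]
      congr 1
      rw [← Real.rpow_natCast, ← Real.rpow_mul (by positivity)]
      simp
      rw [mul_inv_cancel₀ hm.ne', Real.rpow_one]
    rw [a2] at a1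
    have a3 := Real.geom_mean_le_arith_mean2_weighted (w₁ := ((m:ℝ) + 2) / (m + 3)) (w₂ := 1 / ((m:ℝ) + 3))
      (p₁ := b i ^ 2 * (P ^ (1 / ((m:ℝ) + 2)))⁻¹) (p₂ := P) (by positivity) (by positivity) (by positivity)
      hP0.le (by field_simp; ring)
    have a4 : (b i ^ 2 * (P ^ (1 / ((m:ℝ) + 2)))⁻¹) ^ (((m:ℝ) + 2) / (m + 3)) * P ^ (1 / ((m:ℝ) + 3))
        = b i ^ ((2 * (m + 2) : ℝ) / (m + 3)) := by
      rw [Real.mul_rpow (by positivity) (by positivity), Real.inv_rpow (by positivity),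
        ← Real.rpow_mul hP0.le, ← Real.rpow_natCast, ← Real.rpow_mul h0.le]
      rw [show 1 / ((m:ℝ) + 2) * (((m:ℝ) + 2) / (m + 3)) = 1 / ((m:ℝ) + 3) by field_simp,
        mul_assoc, inv_mul_cancel₀ (by positivity), mul_one]
      congr 1; push_cast; field_simp
    rw [a4] at a3
    refine a3.trans ?_
    gcongr
  refine (Finset.sum_le_sum fun i _ => key i).trans ?_
  rw [Finset.sum_add_distrib, ← Finset.mul_sum, ← Finset.mul_sum, Finset.sum_comm]
  simp only [← Finset.mul_sum]
  have h3 : ∑ k : Fin (m + 2), ∑ i : Fin (m + 2) → I,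
      b i ^ 2 * (g k (k.removeNth i)) ^ (-(1 / ((m:ℝ) + 2))) ≤ (m:ℝ) + 2 := by
    refine (Finset.sum_le_sum fun k _ => h2 k).trans (le_of_eq ?_)
    simp
  calc _ ≤ ((m:ℝ) + 2) / (m + 3) * (1 / ((m:ℝ) + 2) * ((m:ℝ) + 2)) + 1 / ((m:ℝ) + 3) * 1 := by gcongr
    _ = 1 := by field_simp; ring

def bhBd {n N : ℕ} (a : (Fin n → Fin N) → ℝ) : Prop :=
  ∀ z : Fin n → Fin N → ℝ, (∀ k j, |z k j| ≤ 1) → |∑ i, a i * ∏ k, z k (i k)| ≤ 1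

noncomputable def bhB : ℕ → ℝ
  | 0 => 1
  | (m + 1) => bhC (m + 1) * bhB m

lemma bhB_pos (m : ℕ) : 0 < bhB m := by
  induction m with
  | zero => simp [bhB]
  | succ m ih => exact mul_pos (bhC_pos _) ih

lemma bhBd_slice {n N : ℕ} (a : (Fin (n + 1) → Fin N) → ℝ) (ha : bhBd a) (k : Fin (n + 1))
    (x : Fin N → Bool) : bhBd (fun i' => bhR (fun t => a (k.insertNth t i')) x) := by
  intro z hz
  have h := ha (k.insertNth (fun t => bhS (x t)) z) (by
    intro j t
    refine Fin.succAboveCases k ?_ (fun j => ?_) j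
    · simp only [Fin.insertNth_apply_same]; unfold bhS; split_ifs <;> simp
    · simpa using hz j t)
  convert h using 2
  rw [← (Fin.insertNthEquiv (fun _ : Fin (n + 1) => Fin N) k).sum_comp, Fintype.sum_prod_type,
      Finset.sum_comm]
  refine Finset.sum_congr rfl fun i' _ => ?_
  simp only [bhR, Finset.sum_mul]
  refine Finset.sum_congr rfl fun t _ => ?_
  have e : (Fin.insertNthEquiv (fun _ : Fin (n + 1) => Fin N) k) (t, i') = k.insertNth t i' := rfl
  simp only [e, Fin.prod_univ_succAbove _ k, Fin.insertNth_apply_same,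
    Fin.insertNth_apply_succAbove]
  ring

lemma bh_main {N : ℕ} (m : ℕ) (a : (Fin (m + 1) → Fin N) → ℝ) (ha : bhBd a) :
    ∑ i, |a i| ^ ((2 * (m + 1) : ℝ) / (m + 2)) ≤ bhB m ^ ((2 * (m + 1) : ℝ) / (m + 2)) := by
  induction m with
  | zero =>
    have h := ha (fun k j => SignType.sign (a (fun _ => j))) (by
      intro k j
      rcases lt_trichotomy (a (fun _ => j)) 0 with h | h | h <;> simp [h])
    have e : (2 * ((0:ℕ) + 1) : ℝ) / ((0:ℕ) + 2) = 1 := by norm_num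
    rw [e]
    simp only [Real.rpow_one, bhB]
    refine le_trans (le_of_eq ?_) ((le_abs_self _).trans h)
    refine Finset.sum_congr rfl fun i _ => ?_
    have : (fun _ => i 0) = i := by funext j; fin_cases j; rfl
    refine Eq.trans ?_ (congrArg (fun y => a i * y) (Fin.prod_univ_one (M := ℝ) _).symm)
    change |a i| = a i * ((SignType.sign (a (fun _ => i 0)) : SignType) : ℝ)
    rw [this, self_mul_sign]
  | succ m ih =>
    have hR : 0 < bhB (m + 1) := bhB_pos _
    have h := bh_mixed m (fun i => |a i| / bhB (m + 1)) (fun i => by positivity) (by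
      intro k
      have h1 : ∀ i' : Fin (m + 1) → Fin N, (∑ t, (|a (k.insertNth t i')| / bhB (m + 1)) ^ 2) ^ ((m + 1 : ℝ) / (m + 2))
        ≤ (bhB m ^ ((2 * (m + 1) : ℝ) / (m + 2)))⁻¹ * 
          bhE (fun x => |bhR (fun t => a (k.insertNth t i')) x| ^ ((2 * (m + 1) : ℝ) / (m + 2))) := by
        intro i'
        have hk := bhKp (fun t => a (k.insertNth t i')) (m + 1) (by omega)
        have e1 : (((m + 1 : ℕ) : ℝ) + 1) = (m:ℝ) + 2 := by push_cast; ring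
        rw [e1] at hk
        push_cast at hk
        simp only [div_pow, sq_abs]
        rw [← Finset.sum_div, Real.div_rpow (by positivity) (by positivity), ← Real.rpow_natCast, ← Real.rpow_mul hR.le]
        rw [show ((2:ℕ):ℝ) * ((m + 1 : ℝ) / (m + 2)) = (2 * (m + 1) : ℝ) / (m + 2) by push_cast; ring]
        have hc := bhC_pos (m + 1)
        have hb := bhB_pos m
        rw [bhB, Real.mul_rpow hc.le hb.le, div_le_iff₀ (by positivity)]
        refine hk.trans (le_of_eq ?_)
        field_simp
      refine (Finset.sum_le_sum fun i' _ => h1 i').trans ?_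
      have hb := bhB_pos m
      rw [← Finset.mul_sum, ← bhE_sum, ← div_eq_inv_mul, div_le_one (by positivity)]
      rw [← bhE_const (N := N) (bhB m ^ _)]
      refine bhE_mono fun x => ?_
      exact ih _ (bhBd_slice a ha k x))
    have e2 : (2 * (((m + 1 : ℕ) : ℝ) + 1)) / (((m + 1 : ℕ) : ℝ) + 2) = (2 * (m + 2) : ℝ) / (m + 3) := by
      push_cast; congr 1 <;> ring
    rw [e2]
    simp only [Real.div_rpow (abs_nonneg _) hR.le] at h
    rw [← Finset.sum_div, div_le_one (by positivity)] at h
    exact h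

lemma bhB_le (m : ℕ) : bhB (m + 1) ≤ √2 * ((m : ℝ) + 1) ^ (0.526322 : ℝ) := by
  induction m with
  | zero => simp [bhB, bhC]
  | succ m ih =>
    rw [bhB]
    have hc : bhC (m + 2) ≤ (((m:ℝ) + 2) / (m + 1)) ^ (0.526322 : ℝ) := by
      rw [bhC, if_neg (by omega)]
      have h1 : (1.69:ℝ) ≤ Real.exp 0.526322 := by
        have := Real.sum_le_exp_of_nonneg (x := 0.526322) (by norm_num) 5
        refine le_trans ?_ this
        simp only [Finset.sum_range_succ, Finset.sum_range_zero, Nat.factorial]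
        norm_num
      have h2 : Real.exp (1 / ((m:ℝ) + 2)) ≤ ((m:ℝ) + 2) / (m + 1) := by
        have h3 := Real.add_one_le_exp (-(1 / ((m:ℝ) + 2)))
        rw [Real.exp_neg, show -(1 / ((m:ℝ) + 2)) + 1 = (((m:ℝ) + 2) / (m + 1))⁻¹ by field_simp; ring] at h3
        exact (inv_le_inv₀ (by positivity) (Real.exp_pos _)).1 h3
      calc (1.69:ℝ) ^ (1 / ((m + 2 : ℕ) : ℝ)) ≤ (Real.exp 0.526322) ^ (1 / ((m + 2 : ℕ) : ℝ)) :=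
            Real.rpow_le_rpow (by norm_num) h1 (by positivity)
        _ = (Real.exp (1 / ((m:ℝ) + 2))) ^ (0.526322 : ℝ) := by
            rw [← Real.exp_mul, ← Real.exp_mul]; push_cast; ring_nf
        _ ≤ _ := Real.rpow_le_rpow (Real.exp_pos _).le h2 (by norm_num)
    have hb := bhB_pos (m + 1)
    calc bhC (m + 1 + 1) * bhB (m + 1) ≤ (((m:ℝ) + 2) / (m + 1)) ^ (0.526322 : ℝ) * (√2 * ((m : ℝ) + 1) ^ (0.526322 : ℝ)) := by
          gcongr
      _ = √2 * (((m:ℝ) + 2) / (m + 1) * (m + 1)) ^ (0.526322 : ℝ) := by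
          rw [Real.mul_rpow (by positivity) (by positivity)]; ring
      _ = _ := by
          rw [div_mul_cancel₀ _ (by positivity)]; push_cast; ring_nf

lemma bh_expand {n N : ℕ} (U : ContinuousMultilinearMap ℝ (fun _ : Fin n => (Fin N → ℝ)) ℝ)
    (z : Fin n → Fin N → ℝ) :
    U z = ∑ i : Fin n → Fin N, U (fun k => Pi.single (i k) (1 : ℝ)) * ∏ k, z k (i k) := by
  have e : z = fun k => ∑ j, z k j • (Pi.single j (1:ℝ) : Fin N → ℝ) := by
    funext k
    exact pi_eq_sum_univ' (z k)
  conv_lhs => rw [e]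
  rw [ContinuousMultilinearMap.map_sum]
  refine Finset.sum_congr rfl fun i _ => ?_
  rw [ContinuousMultilinearMap.map_smul_univ, smul_eq_mul, mul_comm]

lemma bh_ineq (n : ℕ) (hn : 2 ≤ n) (N : ℕ)
    (U : ContinuousMultilinearMap ℝ (fun _ : Fin n => (Fin N → ℝ)) ℝ) :
    BHreal n N U ≤ Real.sqrt 2 * ((n : ℝ) - 1) ^ (0.526322 : ℝ) * ‖U‖ := by
  obtain ⟨m, rfl⟩ := Nat.exists_eq_add_of_le' hn
  rcases (norm_nonneg U).eq_or_lt with h0 | h0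
  · have : U = 0 := norm_eq_zero.1 h0.symm
    subst this
    have e : (0:ℝ) ^ ((2 * ((m + 2 : ℕ) : ℝ)) / (((m + 2 : ℕ) : ℝ) + 1)) = 0 :=
      Real.zero_rpow (by positivity)
    simp only [BHreal, zero_apply, abs_zero, e, Finset.sum_const_zero, norm_zero, mul_zero]
    rw [Real.zero_rpow (by positivity)]
  · have h := bh_main (m + 1) (fun i => U (fun k => Pi.single (i k) (1 : ℝ)) / ‖U‖) (by
      intro z hz
      have h1 : ∑ i : Fin (m + 2) → Fin N, U (fun k => Pi.single (i k) (1 : ℝ)) / ‖U‖ * ∏ k, z k (i k) = U z / ‖U‖ := by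
        rw [bh_expand U z, Finset.sum_div]
        refine Finset.sum_congr rfl fun i _ => ?_
        ring
      rw [h1, abs_div, abs_of_pos h0, div_le_one h0, ← Real.norm_eq_abs]
      refine (U.le_opNorm z).trans ?_
      have : ∏ k, ‖z k‖ ≤ 1 := Finset.prod_le_one (fun k _ => norm_nonneg _) fun k _ =>
        (pi_norm_le_iff_of_nonneg zero_le_one).2 fun j => hz k j
      nlinarith)
    have e2 : (2 * (((m + 1 : ℕ) : ℝ) + 1)) / (((m + 1 : ℕ) : ℝ) + 2) = (2 * ((m + 2 : ℕ) : ℝ)) / (((m + 2 : ℕ) : ℝ) + 1) := by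
      push_cast; congr 1 <;> ring
    rw [e2] at h
    have hb := bhB_pos (m + 1)
    set q : ℝ := (2 * ((m + 2 : ℕ) : ℝ)) / (((m + 2 : ℕ) : ℝ) + 1) with hq
    simp only [abs_div, abs_of_pos h0, Real.div_rpow (abs_nonneg _) h0.le] at h
    rw [← Finset.sum_div, div_le_iff₀ (by positivity), ← Real.mul_rpow hb.le h0.le] at h
    unfold BHreal
    rw [← hq, show (((m + 2 : ℕ) : ℝ) + 1) / (2 * ((m + 2 : ℕ) : ℝ)) = q⁻¹ by rw [hq, inv_div]]
    have hq0 : 0 < q := by rw [hq]; positivity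
    refine (Real.rpow_le_rpow (by positivity) h (by positivity)).trans ?_
    rw [Real.rpow_rpow_inv (by positivity) hq0.ne']
    gcongr
    refine (bhB_le m).trans (le_of_eq ?_)
    congr 2
    push_cast; ring

theorem stmt0 (n : ℕ) (hn : 2 ≤ n) :
    (∀ N : ℕ, 0 < N →
      ∀ U : ContinuousMultilinearMap ℝ (fun _ : Fin n => (Fin N → ℝ)) ℝ,
        BHreal n N U ≤ Real.sqrt 2 * ((n : ℝ) - 1) ^ (0.526322 : ℝ) * ‖U‖) ∧
    KrealOpt n ≤ Real.sqrt 2 * ((n : ℝ) - 1) ^ (0.526322 : ℝ) := by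
  refine ⟨fun N _ U => bh_ineq n hn N U, ?_⟩
  refine csInf_le ⟨1, fun C hC => hC.1⟩ ⟨?_, fun N _ U => bh_ineq n hn N U⟩
  have h1 : (1:ℝ) ≤ √2 := by rw [Real.one_le_sqrt]; norm_num
  have h2 : (1:ℝ) ≤ (n:ℝ) - 1 := by
    have : (2:ℝ) ≤ n := by exact_mod_cast hn
    linarith
  have h3 := Real.one_le_rpow h2 (z := 0.526322) (by norm_num)
  nlinarith
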